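/- arXiv:1501.00903 — 4 statements merged into one kernel-verified Lean document; each statement's English description precedes it below -/
import Mathlib

section
/- For all integers n ≥ 0 and 0 ≤ k ≤ n, the number T_{n,k} defined by the recurrence satisfies the closed form T_{n,k} = Σ_{s=k}^{n} C(n,s) · c^{n−s} · m^{s−k} · S(s,k), where S(s,k) denotes the Stirling numbers of the second kind; consequently the total number T_n = Σ_{k=0}^{n} T_{n,k} equals Σ_{k=0}^{n} C(n,k) c^{n−k} Σ_{j=0}^{k} m^{k−j} S(k,j). -/
/-- The number of `(c,m)`-colored `B_n`-partitions with `k` non-zero-blocks,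
defined by `T 0 0 = 1`, `T n k = 0` for `k > n`, and
`T n k = T (n-1) (k-1) + (m*k + c) * T (n-1) k` for `n ≥ 1`
(where `T (n-1) (-1) = 0`). -/
def Tnk (m c : ℕ) : ℕ → ℕ → ℕ
  | 0, 0 => 1
  | 0, _ + 1 => 0
  | n + 1, 0 => c * Tnk m c n 0
  | n + 1, k + 1 => Tnk m c n k + (m * (k + 1) + c) * Tnk m c n (k + 1)

/-- The total number `T_n = ∑_{k=0}^n T_{n,k}` of `(c,m)`-colored `B_n`-partitions. -/
def Ttot (m c n : ℕ) : ℕ := ∑ k ∈ Finset.range (n + 1), Tnk m c n k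

/-- The Stirling numbers of the second kind `S(n,k)`. -/
def stirling2 : ℕ → ℕ → ℕ
  | 0, 0 => 1
  | 0, _ + 1 => 0
  | _ + 1, 0 => 0
  | n + 1, k + 1 => stirling2 n k + (k + 1) * stirling2 n (k + 1)

/-!
With no colours for the zero block (`c = 0`) the recurrence is solved by `m ^ (n - k) * S(n, k)`.
Adding `c` colours is a binomial transform: choose the `n - s` elements that carry one of the new
colours. Algebraically, Pascal's rule turns the transform at `n + 1` into `c` times the transform at
`n` plus the transform of the shifted sequence, which is exactly the effect of replacing `d` by
`c + d` in the recurrence.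
-/

open Finset

theorem stirling2_eq_stirlingSecond (n k : ℕ) : stirling2 n k = n.stirlingSecond k := by
  induction n generalizing k with
  | zero => cases k <;> rfl
  | succ n ih =>
    cases k with
    | zero => rfl
    | succ k => rw [stirling2, ih, ih, Nat.stirlingSecond_succ_succ, add_comm]

theorem stirling2_eq_zero_of_lt {n k : ℕ} (h : n < k) : stirling2 n k = 0 := by
  rw [stirling2_eq_stirlingSecond, Nat.stirlingSecond_eq_zero_of_lt h]

theorem pow_mul_stirling2_succ_succ (m n k : ℕ) :
    m ^ (n + 1 - (k + 1)) * stirling2 (n + 1) (k + 1) =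
      m ^ (n - k) * stirling2 n k + m * (k + 1) * (m ^ (n - (k + 1)) * stirling2 n (k + 1)) := by
  rw [stirling2, Nat.add_sub_add_right]
  -- Where `n - (k + 1)` truncates, the factor `stirling2 n (k + 1)` vanishes.
  rcases Nat.lt_or_ge n (k + 1) with hlt | hle
  · simp only [stirling2_eq_zero_of_lt hlt, mul_zero, add_zero]
  · rw [show n - k = n - (k + 1) + 1 by lia, pow_succ]
    ring

theorem Tnk_zero_eq_pow_mul_stirling2 (m n k : ℕ) :
    Tnk m 0 n k = m ^ (n - k) * stirling2 n k := by
  induction n generalizing k with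
  | zero => cases k <;> simp [Tnk, stirling2]
  | succ n ih =>
    cases k with
    | zero => simp [Tnk, stirling2]
    | succ k => rw [Tnk, pow_mul_stirling2_succ_succ, ih, ih, add_zero]

theorem sum_antidiagonal_choose_succ_mul_pow_mul {R : Type*} [CommSemiring R] (c : R) (f : ℕ → R)
    (n : ℕ) :
    ∑ p ∈ antidiagonal (n + 1), ((n + 1).choose p.1 : R) * (c ^ p.2 * f p.1) =
      c * ∑ p ∈ antidiagonal n, (n.choose p.1 : R) * (c ^ p.2 * f p.1) +
        ∑ p ∈ antidiagonal n, (n.choose p.1 : R) * (c ^ p.2 * f (p.1 + 1)) := by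
  rw [sum_antidiagonal_choose_succ_mul (fun i j ↦ c ^ j * f i), mul_sum]
  congr 1
  · exact sum_congr rfl fun p _ ↦ by ring
  · exact sum_congr rfl fun p hp ↦ by
      rw [Nat.choose_symm_of_eq_add (mem_antidiagonal.mp hp).symm]

theorem Tnk_add (m c d n k : ℕ) :
    Tnk m (c + d) n k =
      ∑ p ∈ antidiagonal n, n.choose p.1 * (c ^ p.2 * Tnk m d p.1 k) := by
  induction n generalizing k with
  | zero => cases k <;> simp [Tnk]
  | succ n ih =>
    have pascal := sum_antidiagonal_choose_succ_mul_pow_mul c (Tnk m d · k) n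
    simp only [Nat.cast_id] at pascal
    rw [pascal]
    cases k <;>
      · simp only [Tnk, ih, mul_sum, ← sum_add_distrib]
        exact sum_congr rfl fun p _ ↦ by ring

theorem Tnk_eq_sum_Icc (m c n k : ℕ) :
    Tnk m c n k =
      ∑ s ∈ Icc k n, n.choose s * c ^ (n - s) * m ^ (s - k) * stirling2 s k :=
  calc
    Tnk m c n k = ∑ p ∈ antidiagonal n, n.choose p.1 * (c ^ p.2 * Tnk m 0 p.1 k) :=
      Tnk_add m c 0 n k
    _ = ∑ s ∈ range (n + 1), n.choose s * c ^ (n - s) * m ^ (s - k) * stirling2 s k := by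
      simp only [Nat.sum_antidiagonal_eq_sum_range_succ_mk, Tnk_zero_eq_pow_mul_stirling2,
        mul_assoc]
    _ = ∑ s ∈ Icc k n, n.choose s * c ^ (n - s) * m ^ (s - k) * stirling2 s k := by
      refine (sum_subset (fun s hs ↦ ?_) fun s hs hs' ↦ ?_).symm
      · grind
      · rw [stirling2_eq_zero_of_lt (by grind), mul_zero]

theorem Ttot_eq_sum_range (m c n : ℕ) :
    Ttot m c n =
      ∑ s ∈ range (n + 1), n.choose s * c ^ (n - s) *
        ∑ k ∈ range (s + 1), m ^ (s - k) * stirling2 s k := by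
  simp only [Ttot, Tnk_eq_sum_Icc, mul_sum, ← mul_assoc]
  exact sum_comm' fun k s ↦ by simp only [mem_range, mem_Icc]; lia

theorem stmt_0 (m c : ℕ) (hm : 0 < m) (hc : 0 < c) :
    (∀ n k : ℕ, k ≤ n →
      Tnk m c n k =
        ∑ s ∈ Finset.Icc k n, n.choose s * c ^ (n - s) * m ^ (s - k) * stirling2 s k) ∧
    (∀ n : ℕ,
      Ttot m c n =
        ∑ k ∈ Finset.range (n + 1), n.choose k * c ^ (n - k) *
          ∑ j ∈ Finset.range (k + 1), m ^ (k - j) * stirling2 k j) := by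
  exact ⟨fun n k _ ↦ Tnk_eq_sum_Icc m c n k, fun n ↦ Ttot_eq_sum_range m c n⟩
end

section
/- The exponential generating function of the total numbers T_n satisfies the identity Σ_{n≥0} T_n · z^n/n! = exp((e^{mz} − 1)/m + cz), as an identity of formal power series in z over ℚ (equivalently, as an identity of analytic functions of z). -/
/-!
Weight each `T_{n,k}` by `x ^ k`, and let `P_n` be the resulting row polynomial. The recurrence of
the triangle becomes `P_{n+1} = (X + c) P_n + m X P_n'`. Since `w = x e^{mz}` satisfies `w' = m w`
and `F = exp (x (e^{mz} - 1) / m + c z)` satisfies `F' = (w + c) F`, the same recurrence governs the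
derivatives of `F`, whence `F^{(n)} = P_n(w) F`. The Taylor series of `F` at `0` therefore has
coefficients `P_n(x) / n!`, and `x = 1` gives the totals.
-/

open Polynomial

/-- The row polynomial `∑ₖ T_{n,k} X ^ k` of the triangle, known as the `n`-th `r`-Dowling
polynomial (with `r = c`). Its coefficients are in `ℕ` so that it can be evaluated in any
semiring. -/
noncomputable def dowlingPolynomial (m c n : ℕ) : ℕ[X] :=
  ∑ k ∈ Finset.range (n + 1), monomial k (Tnk m c n k)

/-- The exponential generating function `exp (x (e^{mz} - 1) / m + c z)` of the Dowling polynomials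
at `x`, with complex parameters. At `m = 0` the quotient is the junk value `0`, not its limit. -/
noncomputable def dowlingEGF (m c x z : ℂ) : ℂ :=
  Complex.exp (x * ((Complex.exp (m * z) - 1) / m) + c * z)

theorem Tnk_eq_zero_of_lt (m c : ℕ) {n k : ℕ} (h : n < k) : Tnk m c n k = 0 := by
  induction n generalizing k with
  | zero => obtain ⟨k, rfl⟩ := Nat.exists_eq_add_one.mpr h; rfl
  | succ n ih =>
    obtain ⟨k, rfl⟩ := Nat.exists_eq_add_one.mpr (Nat.zero_lt_of_lt h)
    simp [Tnk, ih (show n < k by omega), ih (show n < k + 1 by omega)]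

theorem coeff_dowlingPolynomial (m c n k : ℕ) :
    (dowlingPolynomial m c n).coeff k = Tnk m c n k := by
  simpa [dowlingPolynomial, finsetSum_coeff, coeff_monomial] using
    fun h : n < k => (Tnk_eq_zero_of_lt m c h).symm

theorem dowlingPolynomial_zero (m c : ℕ) : dowlingPolynomial m c 0 = 1 := by
  simp [dowlingPolynomial, Tnk]

theorem dowlingPolynomial_succ (m c n : ℕ) :
    dowlingPolynomial m c (n + 1) =
      (X + C c) * dowlingPolynomial m c n +
        C m * (X * derivative (dowlingPolynomial m c n)) := by
  ext k
  cases k with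
  | zero => simp [coeff_dowlingPolynomial, add_mul, Tnk]
  | succ k =>
    simp only [add_mul, coeff_add, coeff_X_mul, coeff_C_mul, coeff_derivative,
      coeff_dowlingPolynomial, Tnk, Nat.cast_id]
    ring

theorem aeval_one_dowlingPolynomial {R : Type*} [CommSemiring R] (m c n : ℕ) :
    aeval (1 : R) (dowlingPolynomial m c n) = Ttot m c n := by
  simp [dowlingPolynomial, Ttot, aeval_monomial]

theorem hasDerivAt_exp_const_mul (m z : ℂ) :
    HasDerivAt (fun z => Complex.exp (m * z)) (m * Complex.exp (m * z)) z := by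
  simpa [mul_comm] using ((hasDerivAt_id z).const_mul m).cexp

theorem hasDerivAt_dowlingEGF {m : ℂ} (hm : m ≠ 0) (c x z : ℂ) :
    HasDerivAt (dowlingEGF m c x)
      ((x * Complex.exp (m * z) + c) * dowlingEGF m c x z) z := by
  have h_exponent : HasDerivAt (fun z => x * ((Complex.exp (m * z) - 1) / m) + c * z)
      (x * Complex.exp (m * z) + c) z := by
    have h := ((((hasDerivAt_exp_const_mul m z).sub_const 1).div_const m).const_mul x).fun_add
      ((hasDerivAt_id' z).const_mul c)
    rwa [mul_div_cancel_left₀ _ hm, mul_one] at h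
  rw [mul_comm]
  exact h_exponent.cexp

theorem hasDerivAt_aeval_mul_dowlingEGF {m : ℂ} (hm : m ≠ 0) (c x z : ℂ) (p : ℕ[X]) :
    HasDerivAt (fun z => aeval (x * Complex.exp (m * z)) p * dowlingEGF m c x z)
      (((x * Complex.exp (m * z) + c) * aeval (x * Complex.exp (m * z)) p +
        m * (x * Complex.exp (m * z) * aeval (x * Complex.exp (m * z)) (derivative p))) *
          dowlingEGF m c x z) z := by
  have h_aeval : HasDerivAt (fun z => aeval (x * Complex.exp (m * z)) p)
      (aeval (x * Complex.exp (m * z)) (derivative p) * (x * (m * Complex.exp (m * z)))) z :=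
    (p.hasDerivAt_aeval _).comp z ((hasDerivAt_exp_const_mul m z).const_mul x)
  exact (h_aeval.fun_mul (hasDerivAt_dowlingEGF hm c x z)).congr_deriv (by ring)

theorem iteratedDeriv_dowlingEGF {m : ℕ} (hm : m ≠ 0) (c n : ℕ) (x : ℂ) :
    iteratedDeriv n (dowlingEGF m c x) = fun z =>
      aeval (x * Complex.exp (m * z)) (dowlingPolynomial m c n) * dowlingEGF m c x z := by
  induction n with
  | zero => simp [dowlingPolynomial_zero]
  | succ n ih =>
    rw [iteratedDeriv_succ, ih]
    funext z
    rw [(hasDerivAt_aeval_mul_dowlingEGF (Nat.cast_ne_zero.mpr hm) c x z _).deriv,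
      dowlingPolynomial_succ]
    simp

theorem stmt_1_general {m : ℕ} (hm : m ≠ 0) (c : ℕ) (x z : ℂ) :
    HasSum (fun n : ℕ => aeval x (dowlingPolynomial m c n) * z ^ n / n.factorial)
      (Complex.exp (x * ((Complex.exp (m * z) - 1) / m) + c * z)) := by
  have h_entire : Differentiable ℂ (dowlingEGF m c x) := fun w =>
    (hasDerivAt_dowlingEGF (Nat.cast_ne_zero.mpr hm) c x w).differentiableAt
  have h_value : dowlingEGF m c x 0 = 1 := by simp [dowlingEGF]
  refine (Complex.hasSum_taylorSeries_of_entire h_entire 0 z).congr_fun fun n => ?_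
  simp only [iteratedDeriv_dowlingEGF hm, h_value, mul_zero, Complex.exp_zero, mul_one, sub_zero,
    smul_eq_mul]
  ring

/-- The exponential generating function identity
`∑_{n≥0} T_n z^n/n! = exp((e^{mz} − 1)/m + cz)`,
stated as an identity of analytic functions of a real variable `z`. -/
theorem stmt_1 (m c : ℕ) (hm : 0 < m) (hc : 0 < c) (z : ℝ) :
    ∑' n : ℕ, (Ttot m c n : ℝ) * z ^ n / n.factorial =
      Real.exp ((Real.exp (m * z) - 1) / m + c * z) := by
  refine (Complex.hasSum_ofReal.mp ?_).tsum_eq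
  simpa [aeval_one_dowlingPolynomial] using stmt_1_general hm.ne' c 1 z
end

section
/- Let r = r(n) be the unique positive real solution of r·(e^{m·r} + c) = n. Then e^{m·r} = (m·n/log n)·(1 + O(log log n / log n)) as n → ∞; that is, (e^{m·r}·log n/(m·n) − 1) is O(log log n / log n). -/
open Filter

/-!
If `N = r (e ^ (m r) + c)` tends to infinity, then so does `r`, and taking logarithms gives
`log N = m r + log r + o(1)`; hence `log N ∼ m r` and `log log N ∼ log r`. Eliminating `N` from
the quantity to be estimated leaves

  `e ^ (m r) * log N / (m N) - 1`
    `= e ^ (m r) / (e ^ (m r) + c) * ((log N - m r) / (m r)) - c / (e ^ (m r) + c)`,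

where the first term is `O(log r / (m r))` and the second is exponentially small in `r`.
-/

open Asymptotics Real Topology

theorem tendsto_log_sub_log_of_isEquivalent {α : Type*} {l : Filter α} {f g : α → ℝ}
    (hfg : f ~[l] g) (hg : ∀ᶠ a in l, g a ≠ 0) :
    Tendsto (fun a ↦ log (f a) - log (g a)) l (𝓝 0) := by
  have hquot : Tendsto (f / g) l (𝓝 1) := (isEquivalent_iff_tendsto_one hg).1 hfg
  have hlog : Tendsto (fun a ↦ log ((f / g) a)) l (𝓝 0) := by
    simpa only [log_one] using hquot.log one_ne_zero
  refine hlog.congr' ?_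
  filter_upwards [hg, hquot.eventually_ne one_ne_zero] with a hga hquot_ne
  exact log_div (div_ne_zero_iff.1 hquot_ne).1 hga

theorem log_const_mul_isEquivalent_log {k : ℝ} (hk : k ≠ 0) :
    (fun x ↦ log (k * x)) ~[atTop] log := by
  have hsum : (fun x ↦ log k + log x) ~[atTop] log :=
    isLittleO_const_log_atTop.add_isEquivalent IsEquivalent.refl
  refine hsum.congr_left ?_
  filter_upwards [eventually_ne_atTop 0] with x hx
  exact (log_mul hk hx).symm

theorem exp_mul_add_const_isEquivalent {m : ℝ} (hm : 0 < m) (c : ℝ) :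
    (fun r ↦ exp (m * r) + c) ~[atTop] fun r ↦ exp (m * r) := by
  have hexp : Tendsto (fun r ↦ exp (m * r)) atTop atTop :=
    tendsto_exp_atTop.comp (tendsto_id.const_mul_atTop hm)
  exact IsEquivalent.refl.add_const_of_norm_tendsto_atTop (tendsto_norm_atTop_atTop.comp hexp)

theorem const_div_exp_mul_add_const_isBigO {m : ℝ} (hm : 0 < m) (c : ℝ) :
    (fun r ↦ c / (exp (m * r) + c)) =O[atTop] fun r ↦ log r / (m * r) := by
  have hlin : (fun r ↦ m * r) =O[atTop] fun r ↦ exp (m * r) + c := by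
    have hexp : (fun x : ℝ ↦ x) =O[atTop] exp := by
      simpa only [pow_one] using (isLittleO_pow_exp_atTop (n := 1)).isBigO
    exact (hexp.comp_tendsto (tendsto_id.const_mul_atTop hm)).trans
      (exp_mul_add_const_isEquivalent hm c).isBigO_symm
  have hinv : (fun r ↦ (exp (m * r) + c)⁻¹) =O[atTop] fun r ↦ (m * r)⁻¹ := by
    refine hlin.inv_rev ?_
    filter_upwards [eventually_ne_atTop 0] with r hr hzero
    exact absurd hzero (mul_ne_zero hm.ne' hr)
  exact isLittleO_const_log_atTop.isBigO.mul hinv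

/-- The function `r ↦ r * (e ^ (m * r) + c)`, whose inverse is to be estimated. -/
noncomputable def mulExpAdd (m c r : ℝ) : ℝ :=
  r * (exp (m * r) + c)

namespace mulExpAdd

variable {m : ℝ}

theorem tendsto_atTop_of_tendsto_comp {α : Type*} {l : Filter α} {r : α → ℝ} (hm : 0 ≤ m) (c : ℝ)
    (hr : ∀ᶠ a in l, 0 ≤ r a) (h : Tendsto (fun a ↦ mulExpAdd m c (r a)) l atTop) :
    Tendsto r l atTop := by
  refine tendsto_atTop.2 fun B ↦ ?_
  filter_upwards [hr, h.eventually_gt_atTop (B * (exp (m * B) + |c|))] with a hra hlarge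
  by_contra! hrB
  refine hlarge.not_ge ?_
  calc r a * (exp (m * r a) + c)
      ≤ r a * (exp (m * B) + |c|) := by gcongr; exact le_abs_self c
    _ ≤ B * (exp (m * B) + |c|) := by gcongr

theorem log_sub_isBigO_log (hm : 0 < m) (c : ℝ) :
    (fun r ↦ log (mulExpAdd m c r) - m * r) =O[atTop] log := by
  have hequiv : mulExpAdd m c ~[atTop] fun r ↦ r * exp (m * r) :=
    IsEquivalent.refl.mul (exp_mul_add_const_isEquivalent hm c)
  have hne : ∀ᶠ r : ℝ in atTop, r * exp (m * r) ≠ 0 := by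
    filter_upwards [eventually_ne_atTop 0] with r hr
    exact mul_ne_zero hr (exp_ne_zero _)
  have hsmall : (fun r ↦ log (mulExpAdd m c r) - log (r * exp (m * r))) =O[atTop] log :=
    ((tendsto_log_sub_log_of_isEquivalent hequiv hne).isBigO_one ℝ).trans
      isLittleO_const_log_atTop.isBigO
  refine (hsmall.add (isBigO_refl log atTop)).congr' ?_ .rfl
  filter_upwards [eventually_ne_atTop 0] with r hr
  rw [log_mul hr (exp_ne_zero _), log_exp]
  ring

theorem log_isEquivalent (hm : 0 < m) (c : ℝ) :
    (fun r ↦ log (mulExpAdd m c r)) ~[atTop] fun r ↦ m * r :=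
  (log_sub_isBigO_log hm c).trans_isLittleO (isLittleO_log_id_atTop.const_mul_right hm.ne')

theorem log_log_isEquivalent (hm : 0 < m) (c : ℝ) :
    (fun r ↦ log (log (mulExpAdd m c r))) ~[atTop] log :=
  ((log_isEquivalent hm c).log (tendsto_id.const_mul_atTop hm)).trans
    (log_const_mul_isEquivalent_log hm.ne')

theorem exp_mul_log_div_sub_one_isBigO (hm : 0 < m) (c : ℝ) :
    (fun r ↦ exp (m * r) * log (mulExpAdd m c r) / (m * mulExpAdd m c r) - 1) =O[atTop]
      fun r ↦ log r / (m * r) := by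
  have hequiv := exp_mul_add_const_isEquivalent hm c
  have hne : ∀ᶠ r in atTop, exp (m * r) + c ≠ 0 :=
    (hequiv.eventually_pos (.of_forall fun r ↦ exp_pos _)).mono fun _ h ↦ h.ne'
  have hratio : (fun r ↦ exp (m * r) / (exp (m * r) + c)) =O[atTop] fun _ ↦ (1 : ℝ) :=
    ((isEquivalent_iff_tendsto_one hne).1 hequiv.symm).isBigO_one ℝ
  have hlog : (fun r ↦ (log (mulExpAdd m c r) - m * r) / (m * r)) =O[atTop]
      fun r ↦ log r / (m * r) :=
    (log_sub_isBigO_log hm c).mul (isBigO_refl _ _)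
  have hmain : (fun r ↦ exp (m * r) / (exp (m * r) + c) *
      ((log (mulExpAdd m c r) - m * r) / (m * r))) =O[atTop] fun r ↦ log r / (m * r) := by
    simpa only [one_mul] using hratio.mul hlog
  refine (hmain.sub (const_div_exp_mul_add_const_isBigO hm c)).congr' ?_ .rfl
  filter_upwards [hne, eventually_ne_atTop 0] with r hne hr
  generalize log (mulExpAdd m c r) = logN
  rw [mulExpAdd]
  field_simp
  ring

end mulExpAdd

theorem stmt_8_general {α : Type*} {l : Filter α} {m : ℝ} (hm : 0 < m) (c : ℝ) {r N : α → ℝ}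
    (hN : Tendsto N l atTop)
    (hr : ∀ᶠ a in l, 0 ≤ r a ∧ r a * (exp (m * r a) + c) = N a) :
    (fun a ↦ exp (m * r a) * log (N a) / (m * N a) - 1) =O[l]
      fun a ↦ log (log (N a)) / log (N a) := by
  have hN_eq : (fun a ↦ mulExpAdd m c (r a)) =ᶠ[l] N := hr.mono fun _ h ↦ h.2
  have hr_top : Tendsto r l atTop :=
    mulExpAdd.tendsto_atTop_of_tendsto_comp hm.le c (hr.mono fun _ h ↦ h.1) (hN.congr' hN_eq.symm)
  have herror := (mulExpAdd.log_log_isEquivalent hm c).div (mulExpAdd.log_isEquivalent hm c)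
  have hbound := (mulExpAdd.exp_mul_log_div_sub_one_isBigO hm c).trans_isEquivalent herror.symm
  refine (hbound.comp_tendsto hr_top).congr' ?_ ?_ <;>
  · filter_upwards [hN_eq] with a ha
    simp only [Function.comp_apply, Pi.div_apply, ha]

/-- If `r n` is the unique positive solution of `r·(e^{m·r} + c) = n`, then
`e^{m·r} = (m·n/log n)·(1 + O(log log n / log n))` as `n → ∞`. -/
theorem stmt_8 (m c : ℕ) (hm : 0 < m) (hc : 0 < c) (r : ℕ → ℝ)
    (hr : ∀ n : ℕ, 2 ≤ n → 0 < r n ∧ r n * (Real.exp (m * r n) + c) = n) :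
    (fun n : ℕ => Real.exp (m * r n) * Real.log n / (m * n) - 1) =O[atTop]
      (fun n : ℕ => Real.log (Real.log n) / Real.log n) := by
  refine stmt_8_general (Nat.cast_pos.2 hm) c tendsto_natCast_atTop_atTop ?_
  filter_upwards [eventually_ge_atTop 2] with n hn
  exact (hr n hn).imp_left le_of_lt
end

section
/- Let r = r(n) be the unique positive real solution of r·(e^{m·r} + c) = n. Then (n/r)^n = e^{m·r·n + c·r}·(1 + O(log² n / n)) as n → ∞; that is, ((n/r)^n · e^{−m·r·n − c·r} − 1) is O(log² n / n). -/
open Filter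

/-!
Write `E = e^{m·r}`, so that `N = r·(E + c)`. Taking logarithms,
`N·log (N/r) = m·r·N + c·r + r·E·klFun (1 + c/E)`, where `klFun x = x·log x + 1 - x` vanishes to
second order at `x = 1`. As `N → ∞` also `r → ∞`, hence `N ∼ r·E` and `r = O(log N)`, and the error
term in the exponent is `O(r·E·(c/E)²) = O(r/E) = O(r²/N) = O(log² N / N)`.
-/

section

open Real InformationTheory Asymptotics Topology

lemma klFun_le_sub_one_sq {x : ℝ} (hx : 0 ≤ x) : klFun x ≤ (x - 1) ^ 2 := by
  rcases hx.eq_or_lt with rfl | hx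
  · simp [klFun_zero]
  · calc klFun x = x * log x + 1 - x := rfl
      _ ≤ x * (x - 1) + 1 - x := by gcongr; exact log_le_sub_one_of_pos hx
      _ = (x - 1) ^ 2 := by ring

lemma isBigO_exp_sub_one : (fun x : ℝ ↦ exp x - 1) =O[𝓝 0] fun x ↦ x := by
  simpa using (hasDerivAt_exp 0).isBigO_sub

lemma div_rpow_mul_exp_neg_eq_exp_klFun {m c r N : ℝ} (hr : 0 < r) (hN : 0 < N)
    (h : r * (exp (m * r) + c) = N) :
    (N / r) ^ N * exp (-(m * r * N + c * r)) =
      exp (r * exp (m * r) * klFun (1 + c / exp (m * r))) := by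
  have hdiv : N / r = exp (m * r) * (1 + c / exp (m * r)) := by
    rw [← h]; field_simp
  have hbase : 0 < 1 + c / exp (m * r) :=
    pos_of_mul_pos_right (hdiv ▸ div_pos hN hr) (exp_pos _).le
  have hlog : log (N / r) = m * r + log (1 + c / exp (m * r)) := by
    rw [hdiv, log_mul (exp_ne_zero _) hbase.ne', log_exp]
  rw [rpow_def_of_pos (div_pos hN hr), ← exp_add, hlog, klFun, ← h]
  congr 1
  field_simp
  ring

variable {α : Type*} {l : Filter α} {m c : ℝ} {r N : α → ℝ}

lemma tendsto_atTop_of_mul_exp_add_eq (hm : 0 < m) (hN : Tendsto N l atTop)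
    (hr : ∀ᶠ x in l, 0 < r x ∧ r x * (exp (m * r x) + c) = N x) : Tendsto r l atTop := by
  refine tendsto_atTop.2 fun b ↦ ?_
  filter_upwards [hr, hN.eventually_gt_atTop (b * (exp (m * b) + |c|))] with x ⟨hpos, heq⟩ hlarge
  by_contra! hlt
  have : N x ≤ b * (exp (m * b) + |c|) := by
    rw [← heq]
    have : 0 < b := hpos.trans hlt
    calc r x * (exp (m * r x) + c) ≤ r x * (exp (m * b) + |c|) := by gcongr; exact le_abs_self c
      _ ≤ b * (exp (m * b) + |c|) := by gcongr
  exact hlarge.not_ge this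

lemma tendsto_exp_mul_atTop (hm : 0 < m) (hr : Tendsto r l atTop) :
    Tendsto (fun x ↦ exp (m * r x)) l atTop :=
  tendsto_exp_atTop.comp (hr.const_mul_atTop hm)

lemma isEquivalent_mul_exp_of_mul_exp_add_eq (hm : 0 < m) (hr_top : Tendsto r l atTop)
    (hr : ∀ᶠ x in l, r x * (exp (m * r x) + c) = N x) :
    N ~[l] fun x ↦ r x * exp (m * r x) := by
  have hconst : (fun _ ↦ c) =o[l] fun x ↦ exp (m * r x) :=
    isLittleO_const_left.2 <| .inr <|
      tendsto_norm_atTop_atTop.comp (tendsto_exp_mul_atTop hm hr_top)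
  refine ((isBigO_refl r l).mul_isLittleO hconst).congr' ?_ .rfl
  filter_upwards [hr] with x heq
  simp only [Pi.sub_apply, ← heq]
  ring

lemma isBigO_log_of_isBigO_mul_exp (hm : 0 < m) (hr_top : Tendsto r l atTop)
    (hN : (fun x ↦ r x * exp (m * r x)) =O[l] N) : r =O[l] fun x ↦ log (N x) := by
  have hexp : (fun x ↦ exp (m * r x)) =o[l] N := by
    have hone : (fun _ ↦ (1 : ℝ)) =o[l] r :=
      isLittleO_const_left.2 <| .inr <| tendsto_norm_atTop_atTop.comp hr_top
    simpa only [one_mul] using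
      (hone.mul_isBigO (isBigO_refl (fun x ↦ exp (m * r x)) l)).trans_isBigO hN
  refine .of_bound m⁻¹ ?_
  filter_upwards [hexp.eventuallyLE, hr_top.eventually_gt_atTop 0] with x hle hr_pos
  rw [norm_of_nonneg (exp_pos _).le, norm_eq_abs] at hle
  have hlog : m * r x ≤ log (N x) := by
    rw [← log_abs, le_log_iff_exp_le ((exp_pos _).trans_le hle)]
    exact hle
  rw [norm_of_nonneg hr_pos.le, ← div_eq_inv_mul, le_div_iff₀' hm]
  exact hlog.trans (le_abs_self _)

lemma isBigO_mul_exp_mul_klFun (hm : 0 < m) (hr_top : Tendsto r l atTop) :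
    (fun x ↦ r x * exp (m * r x) * klFun (1 + c / exp (m * r x))) =O[l]
      fun x ↦ r x / exp (m * r x) := by
  refine .of_bound (c ^ 2) ?_
  filter_upwards [hr_top.eventually_gt_atTop 0,
    (tendsto_exp_mul_atTop hm hr_top).eventually_ge_atTop (-c)] with x hr_pos hexp
  have hbase : 0 ≤ 1 + c / exp (m * r x) := by
    rw [one_add_div (exp_ne_zero _)]
    exact div_nonneg (by linarith) (exp_pos _).le
  have hkl := klFun_nonneg hbase
  rw [norm_of_nonneg (by positivity), norm_of_nonneg (by positivity)]
  calc r x * exp (m * r x) * klFun (1 + c / exp (m * r x))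
      ≤ r x * exp (m * r x) * (1 + c / exp (m * r x) - 1) ^ 2 := by
        gcongr; exact klFun_le_sub_one_sq hbase
    _ = c ^ 2 * (r x / exp (m * r x)) := by field_simp; ring

lemma isBigO_div_exp_of_isEquivalent_mul_exp (hm : 0 < m) (hr_top : Tendsto r l atTop)
    (hequiv : N ~[l] fun x ↦ r x * exp (m * r x)) :
    (fun x ↦ r x / exp (m * r x)) =O[l] fun x ↦ log (N x) ^ 2 / N x := by
  have hlog : r =O[l] fun x ↦ log (N x) := isBigO_log_of_isBigO_mul_exp hm hr_top hequiv.symm.isBigO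
  have hinv : (fun x ↦ (r x * exp (m * r x))⁻¹) =O[l] fun x ↦ (N x)⁻¹ := hequiv.symm.inv.isBigO
  refine ((hlog.pow 2).mul hinv).congr' ?_ (.of_forall fun x ↦ (div_eq_mul_inv _ _).symm)
  filter_upwards [hr_top.eventually_ne_atTop 0] with x hr_ne
  field_simp

theorem stmt_9_general (hm : 0 < m) (hN : Tendsto N l atTop)
    (hr : ∀ᶠ x in l, 0 < r x ∧ r x * (exp (m * r x) + c) = N x) :
    (fun x ↦ (N x / r x) ^ N x * exp (-(m * r x * N x + c * r x)) - 1)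
      =O[l] fun x ↦ log (N x) ^ 2 / N x := by
  have hr_top : Tendsto r l atTop := tendsto_atTop_of_mul_exp_add_eq hm hN hr
  have hequiv := isEquivalent_mul_exp_of_mul_exp_add_eq hm hr_top (hr.mono fun _ h ↦ h.2)
  have hexponent : (fun x ↦ r x * exp (m * r x) * klFun (1 + c / exp (m * r x))) =O[l]
      fun x ↦ log (N x) ^ 2 / N x :=
    (isBigO_mul_exp_mul_klFun hm hr_top).trans
      (isBigO_div_exp_of_isEquivalent_mul_exp hm hr_top hequiv)
  have hlog : Tendsto (fun x ↦ log (N x) ^ 2 / N x) l (𝓝 0) :=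
    isLittleO_pow_log_id_atTop.tendsto_div_nhds_zero.comp hN
  have hzero := hexponent.trans_tendsto hlog
  refine ((isBigO_exp_sub_one.comp_tendsto hzero).trans hexponent).congr' ?_ .rfl
  filter_upwards [hr, hN.eventually_gt_atTop 0] with x ⟨hr_pos, heq⟩ hN_pos
  rw [Function.comp_apply, div_rpow_mul_exp_neg_eq_exp_klFun hr_pos hN_pos heq]

end

/-- If `r n` is the unique positive solution of `r·(e^{m·r} + c) = n`, then
`(n/r)^n = e^{m·r·n + c·r}·(1 + O(log² n / n))` as `n → ∞`. -/
theorem stmt_9 (m c : ℕ) (hm : 0 < m) (hc : 0 < c) (r : ℕ → ℝ)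
    (hr : ∀ n : ℕ, 2 ≤ n → 0 < r n ∧ r n * (Real.exp (m * r n) + c) = n) :
    (fun n : ℕ => ((n : ℝ) / r n) ^ n * Real.exp (-(m * r n * n + c * r n)) - 1)
      =O[atTop] (fun n : ℕ => (Real.log n) ^ 2 / n) := by
  simpa only [Real.rpow_natCast] using stmt_9_general (Nat.cast_pos.2 hm)
    tendsto_natCast_atTop_atTop ((eventually_ge_atTop 2).mono hr)
end
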